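/- There is a universal constant C > 0 such that for every d ≥ 1, every n with nd even, every 1 ≤ i ≤ n − 1 and every 0 ≤ j ≤ i d / 2, the expected number Z_{i,j} of vertex subsets of the configuration-model random d-regular multigraph G_{n,d} of size i inducing exactly j edges satisfies E[Z_{i,j}] ≤ C · d · √n · exp{ n · [ (d/2) · H(M(i/n, j/(nd))) − (d − 1) · H(i/n, 1 − i/n) ] }. -/

import Mathlib

/-!
The configuration model; entropy upper bound for `E[Z_{i,j}]`.
-/

open scoped Classical

noncomputable section

def pairings (n d : ℕ) : Finset ((Fin n × Fin d) ≃ (Fin n × Fin d)) :=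
  Finset.univ.filter fun M => (∀ x, M (M x) = x) ∧ ∀ x, M x ≠ x

/-- The number of edges (loops and parallel edges counted) of the sub-multigraph induced on
`S` by the configuration-model multigraph of the pairing `M`. -/
def edgesWithin {n d : ℕ} (M : (Fin n × Fin d) ≃ (Fin n × Fin d)) (S : Finset (Fin n)) : ℕ :=
  (Finset.univ.filter fun h : Fin n × Fin d => h.1 ∈ S ∧ (M h).1 ∈ S).card / 2

/-- `Z_{i,j}`: the number of vertex subsets `S` with `|S| = i` inducing exactly `j` edges. -/
def Zcount (n d i j : ℕ) (M : (Fin n × Fin d) ≃ (Fin n × Fin d)) : ℕ :=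
  (Finset.univ.filter fun S : Finset (Fin n) => S.card = i ∧ edgesWithin M S = j).card

/-- The expectation of `Z_{i,j}` under the uniform distribution on pairings. -/
def EZ (n d i j : ℕ) : ℝ :=
  (∑ M ∈ pairings n d, (Zcount n d i j M : ℝ)) / ((pairings n d).card : ℝ)

/-- `h(x) = -x log x`, with `h(0) = 0` (automatic since `Real.log 0 = 0`). -/
def h (x : ℝ) : ℝ := -(x * Real.log x)

/-- The entropy `H(M(α, β))` of the edge-profile matrix with entries
`2β, α - 2β, α - 2β, 1 - 2α + 2β`. -/
def Hmat (α β : ℝ) : ℝ := h (2 * β) + 2 * h (α - 2 * β) + h (1 - 2 * α + 2 * β)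

/-!
A pairing `M` of the `N = n * d` half-edges and a vertex set `S` have a *profile*: the number of
half-edges of each type (own side of `S`, partner's side). For a fixed pairing, draw the types of
the pairs independently from the normalised profile, whose entropy is `H`. All colourings with
that profile have the same probability `exp (-(N / 2) * H)`, so there are at most
`exp ((N / 2) * H)` of them. By symmetry the probability that a set of `i * d` half-edges has a
given number of internal pairs depends only on its size, so it is at most
`exp ((N / 2) * H) / N.choose (i * d)`. Summing over the `n.choose i` vertex sets, it remains to
bound one binomial coefficient from above by its entropy and the other from below by Stirling.
-/

open Finset Real

section Entropy

lemma h_eq_negMulLog (x : ℝ) : h x = negMulLog x := by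
  rw [h, negMulLog, neg_mul]

lemma h_add_h_one_sub (x : ℝ) : h x + h (1 - x) = binEntropy x := by
  rw [h_eq_negMulLog, h_eq_negMulLog, binEntropy_eq_negMulLog_add_negMulLog_one_sub]

lemma natCast_div_pow_self_eq_exp {N : ℕ} (hN : N ≠ 0) (c : ℕ) :
    ((c : ℝ) / N) ^ c = exp (-(N * negMulLog (c / N))) := by
  rcases c.eq_zero_or_pos with rfl | hc
  · simp
  · have hpos : (0 : ℝ) < c / N := by positivity
    rw [← exp_log (pow_pos hpos c), log_pow, negMulLog]
    congr 1
    field_simp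

lemma exp_mul_binEntropy_mul_pow_mul_pow {N a : ℕ} (hN : N ≠ 0) (ha : a ≤ N) :
    exp (N * binEntropy (a / N)) * ((a : ℝ) ^ a * ((N - a : ℕ) : ℝ) ^ (N - a)) = (N : ℝ) ^ N := by
  have hN' : (N : ℝ) ≠ 0 := mod_cast hN
  have hcompl : 1 - (a : ℝ) / N = (N - a : ℕ) / N := by
    rw [Nat.cast_sub ha, sub_div, div_self hN']
  have hpow (c : ℕ) : exp (N * negMulLog (c / N)) * (c : ℝ) ^ c = (N : ℝ) ^ c := by
    have hc := natCast_div_pow_self_eq_exp hN c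
    rw [div_pow, div_eq_iff (by positivity)] at hc
    rw [hc, ← mul_assoc, ← exp_add, add_neg_cancel, exp_zero, one_mul]
  rw [binEntropy_eq_negMulLog_add_negMulLog_one_sub, hcompl, mul_add, exp_add, mul_mul_mul_comm,
    hpow, hpow, ← pow_add, Nat.add_sub_cancel' ha]

lemma choose_mul_pow_mul_pow_le {N a : ℕ} (ha : a ≤ N) :
    N.choose a * (a ^ a * (N - a) ^ (N - a)) ≤ N ^ N := by
  calc N.choose a * (a ^ a * (N - a) ^ (N - a))
      = a ^ a * (N - a) ^ (N - a) * N.choose a := mul_comm _ _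
    _ ≤ ∑ m ∈ range (N + 1), a ^ m * (N - a) ^ (N - m) * N.choose m :=
        single_le_sum (f := fun m ↦ a ^ m * (N - a) ^ (N - m) * N.choose m)
          (fun _ _ ↦ Nat.zero_le _) (mem_range.2 (Nat.lt_succ_of_le ha))
    _ = N ^ N := by
        simpa only [Nat.add_sub_cancel' ha, Nat.cast_id] using (add_pow a (N - a) N).symm

lemma choose_le_exp_binEntropy {N a : ℕ} (hN : N ≠ 0) (ha : a ≤ N) :
    (N.choose a : ℝ) ≤ exp (N * binEntropy (a / N)) := by
  have hpos : 0 < (a : ℝ) ^ a * ((N - a : ℕ) : ℝ) ^ (N - a) := by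
    exact_mod_cast Nat.mul_pos Nat.pow_self_pos Nat.pow_self_pos
  refine le_of_mul_le_mul_right ?_ hpos
  rw [exp_mul_binEntropy_mul_pow_mul_pow hN ha]
  exact_mod_cast choose_mul_pow_mul_pow_le ha

lemma factorial_le_stirling {n : ℕ} (hn : n ≠ 0) :
    (n.factorial : ℝ) ≤ exp 1 * √n * (n / exp 1) ^ n := by
  obtain ⟨m, rfl⟩ := Nat.exists_eq_succ_of_ne_zero hn
  have hanti : Stirling.stirlingSeq (m + 1) ≤ exp 1 / √2 :=
    Stirling.stirlingSeq_one ▸ Stirling.stirlingSeq'_antitone (Nat.zero_le m)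
  rw [Stirling.stirlingSeq, div_le_iff₀ (by positivity), sqrt_mul zero_le_two] at hanti
  refine hanti.trans_eq ?_
  field_simp

lemma pow_self_le_choose_mul_pow_mul_pow {N a : ℕ} (ha : a ≠ 0) (haN : a < N) :
    (N : ℝ) ^ N ≤
      exp 1 ^ 2 * √N * N.choose a * ((a : ℝ) ^ a * ((N - a : ℕ) : ℝ) ^ (N - a)) := by
  set b := N - a
  have hb : b ≠ 0 := (Nat.sub_pos_of_lt haN).ne'
  have hN : (0 : ℝ) < N := mod_cast haN.pos
  have hsqrt : √a * √b ≤ √N * √N := by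
    gcongr
    exact Nat.sub_le N a
  have hpi : √(N : ℝ) ≤ √(2 * π * N) :=
    sqrt_le_sqrt (le_mul_of_one_le_left hN.le (by linarith [pi_gt_three]))
  have hexp : exp 1 ^ a * exp 1 ^ b = exp 1 ^ N := by
    rw [← pow_add, Nat.add_sub_cancel' haN.le]
  have hpos : 0 < √(N : ℝ) / exp 1 ^ N := by positivity
  refine le_of_mul_le_mul_left ?_ hpos
  calc √(N : ℝ) / exp 1 ^ N * N ^ N
      = √N * (N / exp 1) ^ N := by rw [div_pow]; ring
    _ ≤ √(2 * π * N) * (N / exp 1) ^ N := by gcongr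
    _ ≤ N.factorial := Stirling.le_factorial_stirling N
    _ = N.choose a * a.factorial * b.factorial :=
        mod_cast (Nat.choose_mul_factorial_mul_factorial haN.le).symm
    _ ≤ N.choose a * (exp 1 * √a * (a / exp 1) ^ a) * (exp 1 * √b * (b / exp 1) ^ b) := by
        gcongr <;> exact factorial_le_stirling ‹_›
    _ = exp 1 ^ 2 * (√a * √b) * N.choose a * ((a : ℝ) ^ a * (b : ℝ) ^ b) / exp 1 ^ N := by
        rw [div_pow, div_pow, ← hexp]
        field_simp
    _ ≤ exp 1 ^ 2 * (√N * √N) * N.choose a * ((a : ℝ) ^ a * (b : ℝ) ^ b) / exp 1 ^ N := by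
        gcongr
    _ = √N / exp 1 ^ N * (exp 1 ^ 2 * √N * N.choose a * ((a : ℝ) ^ a * (b : ℝ) ^ b)) := by
        ring

lemma exp_binEntropy_le_choose {N a : ℕ} (ha : a ≠ 0) (haN : a < N) :
    exp (N * binEntropy (a / N)) ≤ exp 1 ^ 2 * √N * N.choose a := by
  have hpos : 0 < (a : ℝ) ^ a * ((N - a : ℕ) : ℝ) ^ (N - a) := by
    exact_mod_cast Nat.mul_pos Nat.pow_self_pos Nat.pow_self_pos
  refine le_of_mul_le_mul_right ?_ hpos
  rw [exp_mul_binEntropy_mul_pow_mul_pow haN.ne_bot haN.le]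
  exact pow_self_le_choose_mul_pow_mul_pow ha haN

end Entropy

lemma card_mul_le_sum_pow {ι κ : Type*} [Fintype ι] [Fintype κ] {w : κ → ℝ} (hw : ∀ k, 0 ≤ w k)
    {c : ℝ} {T : Finset (ι → κ)} (hT : ∀ f ∈ T, c ≤ ∏ i, w (f i)) :
    #T * c ≤ (∑ k, w k) ^ Fintype.card ι := by
  calc #T * c = #T • c := (nsmul_eq_mul _ _).symm
    _ ≤ ∑ f ∈ T, ∏ i, w (f i) := card_nsmul_le_sum T _ c hT
    _ ≤ ∑ f : ι → κ, ∏ i, w (f i) :=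
        sum_le_univ_sum_of_nonneg fun f ↦ prod_nonneg fun i _ ↦ hw (f i)
    _ = ∏ _i : ι, ∑ k, w k := (Fintype.prod_sum fun _ ↦ w).symm
    _ = (∑ k, w k) ^ Fintype.card ι := by rw [prod_const, card_univ]

section Pairing

variable {X κ : Type*}

/-- A pairing of `X`, i.e. a perfect matching, encoded as a fixed-point-free involution. -/
def IsPairing (M : Equiv.Perm X) : Prop :=
  Function.Involutive M ∧ ∀ x, M x ≠ x

lemma pairings_eq_filter (n d : ℕ) :
    pairings n d = ({M | IsPairing M} : Finset (Equiv.Perm (Fin n × Fin d))) :=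
  filter_congr fun _ _ ↦ Iff.rfl

lemma isPairing_permCongr_iff (τ M : Equiv.Perm X) :
    IsPairing (τ.permCongr M) ↔ IsPairing M := by
  rw [IsPairing, Function.Involutive, ← τ.forall_congr_right,
    ← τ.forall_congr_right (q := fun x ↦ τ.permCongr M x ≠ x)]
  simp only [Equiv.permCongr_apply, Equiv.symm_apply_apply, τ.apply_eq_iff_eq, ne_eq, IsPairing,
    Function.Involutive]

lemma IsPairing.exists_transversal [Finite X] {M : Equiv.Perm X} (hM : IsPairing M) :
    ∃ R : Finset X, ∀ x, M x ∈ R ↔ x ∉ R := by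
  have := Fintype.ofFinite X
  let e := Fintype.equivFin X
  refine ⟨({x | e x < e (M x)} : Finset X), fun x ↦ ?_⟩
  have hne : e (M x) ≠ e x := e.injective.ne (hM.2 x)
  simp only [mem_filter_univ, hM.1 x, not_lt, hne.le_iff_lt]

variable [Fintype X]

@[to_additive]
lemma prod_transversal_pow_two {α : Type*} [CommMonoid α] {M : Equiv.Perm X} {R : Finset X}
    (hR : ∀ x, M x ∈ R ↔ x ∉ R) {F : X → α} (hF : ∀ x, F (M x) = F x) :
    (∏ x ∈ R, F x) ^ 2 = ∏ x, F x := by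
  have hcompl : ∏ x ∈ Rᶜ, F x = ∏ x ∈ R, F x :=
    prod_equiv M (fun x ↦ by rw [mem_compl, hR]) fun x _ ↦ (hF x).symm
  rw [← prod_mul_prod_compl R, hcompl, sq]

/-- The profile of a colouring `σ` with respect to a pairing `M`: the number of points of each
type (own colour, partner's colour). Points are counted rather than pairs, so the profile is
symmetric and its diagonal entries count every monochromatic pair twice. -/
def profile (M : Equiv.Perm X) (σ : X → κ) (k : κ × κ) : ℕ :=
  #{x | (σ x, σ (M x)) = k}

lemma profile_swap {M : Equiv.Perm X} (hM : Function.Involutive M) (σ : X → κ) (k : κ × κ) :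
    profile M σ k.swap = profile M σ k := by
  refine card_equiv M fun x ↦ ?_
  rw [mem_filter_univ, mem_filter_univ, hM x, ← Prod.swap_inj, Prod.swap_prod_mk, Prod.swap_swap]

lemma profile_permCongr (τ M : Equiv.Perm X) (σ : X → κ) :
    profile (τ.permCongr M) σ = profile M (σ ∘ τ) := by
  ext k
  refine (card_equiv τ fun x ↦ ?_).symm
  rw [mem_filter_univ, mem_filter_univ, Equiv.permCongr_apply, τ.symm_apply_apply]
  rfl

lemma IsPairing.even_profile_diag {M : Equiv.Perm X} (hM : IsPairing M) (σ : X → κ) (c : κ) :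
    Even (profile M σ (c, c)) := by
  obtain ⟨R, hR⟩ := hM.exists_transversal
  have hsum := sum_transversal_nsmul_two hR
    (F := fun x ↦ if (σ x, σ (M x)) = (c, c) then 1 else 0)
    fun x ↦ by simp only [hM.1 x, Prod.mk.injEq, and_comm]
  rw [profile, card_filter, ← hsum, smul_eq_mul]
  exact even_two_mul _

variable [Fintype κ]

lemma prod_pow_profile {α : Type*} [CommMonoid α] (M : Equiv.Perm X) (σ : X → κ)
    (w : κ × κ → α) : ∏ x, w (σ x, σ (M x)) = ∏ k, w k ^ profile M σ k := by
  simp only [profile, ← prod_const]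
  exact (prod_fiberwise' univ (fun x ↦ (σ x, σ (M x))) w).symm

lemma sum_profile (M : Equiv.Perm X) (σ : X → κ) : ∑ k, profile M σ k = Fintype.card X :=
  (card_eq_sum_card_fiberwise fun _ _ ↦ mem_univ _).symm

lemma sum_profile_right (M : Equiv.Perm X) (σ : X → κ) (k : κ) :
    ∑ l, profile M σ (k, l) = #{x | σ x = k} := by
  rw [card_eq_sum_card_fiberwise (f := σ ∘ M) (t := univ) fun _ _ ↦ mem_univ _]
  simp only [profile, filter_filter, Prod.mk.injEq, Function.comp_apply]

lemma prod_transversal_profile_div_card [Nonempty X] {M : Equiv.Perm X}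
    (hM : Function.Involutive M) {R : Finset X} (hR : ∀ x, M x ∈ R ↔ x ∉ R) (σ : X → κ) :
    ∏ x ∈ R, (profile M σ (σ x, σ (M x)) : ℝ) / Fintype.card X
      = exp (-(Fintype.card X / 2 * ∑ k, negMulLog (profile M σ k / Fintype.card X))) := by
  have hsymm (x : X) : profile M σ (σ (M x), σ (M (M x))) = profile M σ (σ x, σ (M x)) := by
    rw [hM x]
    exact profile_swap hM σ (σ x, σ (M x))
  refine (pow_left_inj₀ (by positivity) (exp_pos _).le two_ne_zero).1 ?_
  rw [prod_transversal_pow_two hR fun x ↦ by rw [hsymm x],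
    prod_pow_profile M σ fun k ↦ (profile M σ k : ℝ) / Fintype.card X]
  simp only [natCast_div_pow_self_eq_exp Fintype.card_ne_zero, ← exp_sum, ← exp_nat_mul,
    sum_neg_distrib, ← mul_sum]
  congr 1
  push_cast
  ring

lemma IsPairing.card_colourings_le [Nonempty X] {M : Equiv.Perm X} (hM : IsPairing M)
    (σ₀ : X → κ) :
    (#{σ : X → κ | profile M σ = profile M σ₀} : ℝ)
      ≤ exp (Fintype.card X / 2 * ∑ k, negMulLog (profile M σ₀ k / Fintype.card X)) := by
  obtain ⟨R, hR⟩ := hM.exists_transversal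
  set E := (Fintype.card X : ℝ) / 2 * ∑ k, negMulLog (profile M σ₀ k / Fintype.card X)
  let w (k : κ × κ) : ℝ := profile M σ₀ k / Fintype.card X
  have hw : ∑ k, w k = 1 := by
    rw [← sum_div, ← Nat.cast_sum, sum_profile, div_self (by positivity)]
  let restrict (σ : X → κ) (x : R) : κ × κ := (σ x, σ (M x))
  have hinj : Function.Injective restrict := by
    intro σ τ hστ
    ext x
    by_cases hx : x ∈ R
    · exact congrArg Prod.fst (congrFun hστ ⟨x, hx⟩)
    · simpa only [restrict, hM.1 x] using
        congrArg Prod.snd (congrFun hστ ⟨M x, (hR x).2 hx⟩)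
  have hprob : ∀ f ∈ ({σ | profile M σ = profile M σ₀} : Finset (X → κ)).image restrict,
      exp (-E) ≤ ∏ x, w (f x) := by
    simp only [mem_image, mem_filter_univ, forall_exists_index, and_imp, forall_apply_eq_imp_iff₂]
    intro σ hσ
    rw [prod_coe_sort R fun x ↦ w (σ x, σ (M x))]
    simp only [w, E, ← hσ, prod_transversal_profile_div_card hM.1 hR, le_refl]
  have hbound := card_mul_le_sum_pow (fun k ↦ by positivity) hprob
  rwa [card_image_of_injective _ hinj, hw, one_pow, exp_neg, mul_inv_le_iff₀ (exp_pos _),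
    one_mul] at hbound

end Pairing

section InternalPairs

variable {X : Type*}

/-- The two-colouring of `X` that tells the points of `A` from those outside `A`. -/
def side (A : Finset X) (x : X) : Bool :=
  decide (x ∈ A)

lemma side_injective : Function.Injective (side (X := X)) := by
  intro A B hAB
  ext x
  simpa only [side, decide_eq_decide] using congrFun hAB x

variable [Fintype X]

/-- The number of pairs of the pairing `M` with both points in `A`. For the half-edges at a vertex
set `S` this is the number of edges that `S` induces. -/
def internalPairs (M : Equiv.Perm X) (A : Finset X) : ℕ :=
  profile M (side A) (true, true) / 2

lemma edgesWithin_eq_internalPairs {n d : ℕ} (M : Equiv.Perm (Fin n × Fin d))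
    (S : Finset (Fin n)) : edgesWithin M S = internalPairs M (S ×ˢ univ) := by
  simp only [edgesWithin, internalPairs, profile, side, Prod.mk.injEq, decide_eq_true_eq,
    mem_product, mem_univ, and_true]

lemma internalPairs_permCongr (τ M : Equiv.Perm X) (A : Finset X) :
    internalPairs (τ.permCongr M) (A.map τ.toEmbedding) = internalPairs M A := by
  have hside : side (A.map τ.toEmbedding) ∘ τ = side A := by
    ext x
    simp only [side, Function.comp_apply, mem_map_equiv, τ.symm_apply_apply]
  rw [internalPairs, profile_permCongr, hside, internalPairs]

lemma IsPairing.profile_side {M : Equiv.Perm X} (hM : IsPairing M) (A : Finset X) :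
    profile M (side A) (true, true) = 2 * internalPairs M A ∧
    profile M (side A) (true, false) + 2 * internalPairs M A = #A ∧
    profile M (side A) (false, true) + 2 * internalPairs M A = #A ∧
    profile M (side A) (false, false) + 2 * #A = Fintype.card X + 2 * internalPairs M A := by
  have hdiag : profile M (side A) (true, true) = 2 * internalPairs M A :=
    (Nat.two_mul_div_two_of_even (hM.even_profile_diag _ _)).symm
  have hsymm : profile M (side A) (false, true) = profile M (side A) (true, false) :=
    profile_swap hM.1 (side A) (true, false)
  have hmarginal : profile M (side A) (true, true) + profile M (side A) (true, false) = #A := by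
    have hsum := sum_profile_right M (side A) true
    simpa only [Fintype.sum_bool, side, decide_eq_true_eq, filter_univ_mem] using hsum
  have htotal := sum_profile M (side A)
  rw [Fintype.sum_prod_type, Fintype.sum_bool, Fintype.sum_bool, Fintype.sum_bool] at htotal
  omega

lemma IsPairing.sum_negMulLog_profile_side [Nonempty X] {M : Equiv.Perm X} (hM : IsPairing M)
    (A : Finset X) :
    ∑ k, negMulLog (profile M (side A) k / Fintype.card X)
      = Hmat (#A / Fintype.card X) (internalPairs M A / Fintype.card X) := by
  obtain ⟨htt, htf, hft, hff⟩ := hM.profile_side A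
  have hN : (Fintype.card X : ℝ) ≠ 0 := by positivity
  rify at htt htf hft hff
  simp only [Hmat, h_eq_negMulLog, Fintype.sum_prod_type, Fintype.sum_bool, htt,
    eq_sub_of_add_eq htf, eq_sub_of_add_eq hft, eq_sub_of_add_eq hff]
  have hoff : (#A - 2 * internalPairs M A : ℝ) / Fintype.card X
      = #A / Fintype.card X - 2 * (internalPairs M A / Fintype.card X) := by ring
  have hout : (Fintype.card X + 2 * internalPairs M A - 2 * #A : ℝ) / Fintype.card X
      = 1 - 2 * (#A / Fintype.card X) + 2 * (internalPairs M A / Fintype.card X) := by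
    field_simp
    ring
  rw [hoff, hout, mul_div_assoc]
  ring

lemma IsPairing.card_finsets_le [Nonempty X] {M : Equiv.Perm X} (hM : IsPairing M) (a j : ℕ) :
    (#{A : Finset X | #A = a ∧ internalPairs M A = j} : ℝ)
      ≤ exp (Fintype.card X / 2 * Hmat (a / Fintype.card X) (j / Fintype.card X)) := by
  rcases eq_empty_or_nonempty ({A : Finset X | #A = a ∧ internalPairs M A = j} : Finset _)
    with hempty | ⟨A₀, hA₀⟩
  · rw [hempty, card_empty, Nat.cast_zero]
    positivity
  obtain ⟨rfl, rfl⟩ := (mem_filter_univ _).1 hA₀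
  rw [← hM.sum_negMulLog_profile_side]
  refine le_trans ?_ (hM.card_colourings_le (side A₀))
  refine Nat.cast_le.2 (card_le_card_of_injOn side (fun A hA ↦ ?_) side_injective.injOn)
  obtain ⟨hcard, hpairs⟩ := (mem_filter_univ _).1 hA
  have hA := hM.profile_side A
  have hA₀ := hM.profile_side A₀
  refine mem_coe.2 ((mem_filter_univ _).2 (funext ?_))
  simp only [Prod.forall, Bool.forall_bool]
  omega

variable [DecidableEq X]

lemma card_isPairing_internalPairs_congr {A B : Finset X} (hAB : #A = #B) (j : ℕ) :
    #{M : Equiv.Perm X | IsPairing M ∧ internalPairs M A = j}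
      = #{M : Equiv.Perm X | IsPairing M ∧ internalPairs M B = j} := by
  obtain ⟨τ, rfl⟩ := Equiv.Perm.exists_map_finset_eq A B hAB
  refine card_equiv τ.permCongr fun M ↦ ?_
  simp only [mem_filter_univ, isPairing_permCongr_iff, internalPairs_permCongr]

lemma choose_mul_card_isPairing_internalPairs (A : Finset X) (j : ℕ) :
    (Fintype.card X).choose #A * #{M : Equiv.Perm X | IsPairing M ∧ internalPairs M A = j}
      = ∑ M : Equiv.Perm X with IsPairing M,
          #{B : Finset X | #B = #A ∧ internalPairs M B = j} := by
  calc (Fintype.card X).choose #A * #{M : Equiv.Perm X | IsPairing M ∧ internalPairs M A = j}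
      = ∑ B ∈ powersetCard #A (univ : Finset X),
          #{M : Equiv.Perm X | IsPairing M ∧ internalPairs M B = j} := by
        rw [sum_congr rfl fun B hB ↦
            card_isPairing_internalPairs_congr (mem_powersetCard_univ.1 hB) j,
          sum_const, card_powersetCard, card_univ, smul_eq_mul]
    _ = ∑ B ∈ powersetCard #A (univ : Finset X),
          #{M ∈ {M : Equiv.Perm X | IsPairing M} | internalPairs M B = j} := by
        simp only [filter_filter]
    _ = ∑ M : Equiv.Perm X with IsPairing M,
          #{B ∈ powersetCard #A (univ : Finset X) | internalPairs M B = j} :=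
        sum_card_bipartiteAbove_eq_sum_card_bipartiteBelow fun B M ↦ internalPairs M B = j
    _ = ∑ M : Equiv.Perm X with IsPairing M,
          #{B : Finset X | #B = #A ∧ internalPairs M B = j} := by
        simp only [← univ_filter_card_eq, filter_filter]

lemma choose_mul_card_isPairing_internalPairs_le [Nonempty X] (A : Finset X) (j : ℕ) :
    ((Fintype.card X).choose #A : ℝ) *
        #{M : Equiv.Perm X | IsPairing M ∧ internalPairs M A = j}
      ≤ #{M : Equiv.Perm X | IsPairing M} *
        exp (Fintype.card X / 2 * Hmat (#A / Fintype.card X) (j / Fintype.card X)) := by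
  rw [← Nat.cast_mul, choose_mul_card_isPairing_internalPairs, Nat.cast_sum, ← nsmul_eq_mul]
  exact sum_le_card_nsmul _ _ _ fun M hM ↦ ((mem_filter_univ M).1 hM).card_finsets_le #A j

end InternalPairs

section ConfigurationModel

variable {n d : ℕ}

lemma sum_Zcount (n d i j : ℕ) :
    ∑ M ∈ pairings n d, Zcount n d i j M
      = ∑ S : Finset (Fin n) with #S = i, #{M ∈ pairings n d | edgesWithin M S = j} := by
  simp only [Zcount, ← filter_filter]
  exact sum_card_bipartiteAbove_eq_sum_card_bipartiteBelow fun M S ↦ edgesWithin M S = j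

lemma choose_mul_card_pairings_edgesWithin_le (hn : n ≠ 0) (hd : d ≠ 0) (S : Finset (Fin n))
    (j : ℕ) :
    ((n * d).choose (#S * d) : ℝ) * #{M ∈ pairings n d | edgesWithin M S = j}
      ≤ #(pairings n d) * exp (n * d / 2 * Hmat (#S / n) (j / (n * d))) := by
  have := Fin.pos_iff_nonempty.1 (Nat.pos_of_ne_zero hn)
  have := Fin.pos_iff_nonempty.1 (Nat.pos_of_ne_zero hd)
  have hfrac : (#S * d : ℝ) / (n * d) = #S / n := mul_div_mul_right _ _ (Nat.cast_ne_zero.2 hd)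
  have hbound := choose_mul_card_isPairing_internalPairs_le (S ×ˢ (univ : Finset (Fin d))) j
  simp only [card_product, card_univ, Fintype.card_prod, Fintype.card_fin, Nat.cast_mul,
    hfrac] at hbound
  simpa only [pairings_eq_filter, filter_filter, edgesWithin_eq_internalPairs] using hbound

lemma choose_mul_EZ_le (hn : n ≠ 0) (hd : d ≠ 0) (i j : ℕ) :
    ((n * d).choose (i * d) : ℝ) * EZ n d i j
      ≤ n.choose i * exp (n * d / 2 * Hmat (i / n) (j / (n * d))) := by
  rw [EZ, ← Nat.cast_sum, sum_Zcount, ← mul_div_assoc]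
  refine div_le_of_le_mul₀ (by positivity) (by positivity) ?_
  rw [Nat.cast_sum, mul_sum]
  calc ∑ S : Finset (Fin n) with #S = i,
        ((n * d).choose (i * d) : ℝ) * #{M ∈ pairings n d | edgesWithin M S = j}
      ≤ #{S : Finset (Fin n) | #S = i} •
          (#(pairings n d) * exp (n * d / 2 * Hmat (i / n) (j / (n * d)))) := by
        refine sum_le_card_nsmul _ _ _ fun S hS ↦ ?_
        obtain rfl := (mem_filter_univ S).1 hS
        exact choose_mul_card_pairings_edgesWithin_le hn hd S j
    _ = n.choose i * exp (n * d / 2 * Hmat (i / n) (j / (n * d))) * #(pairings n d) := by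
        rw [univ_filter_card_eq, card_powersetCard, card_univ, Fintype.card_fin, nsmul_eq_mul]
        ring

lemma exp_binEntropy_le_choose_mul {i : ℕ} (hd : d ≠ 0) (hi : i ≠ 0) (hin : i < n) :
    exp (n * d * binEntropy (i / n)) ≤ exp 1 ^ 2 * √(n * d) * (n * d).choose (i * d) := by
  have hfrac : (i * d : ℝ) / (n * d) = i / n := mul_div_mul_right _ _ (Nat.cast_ne_zero.2 hd)
  have hid : i * d < n * d := Nat.mul_lt_mul_of_pos_right hin (Nat.pos_of_ne_zero hd)
  simpa only [Nat.cast_mul, hfrac] using exp_binEntropy_le_choose (mul_ne_zero hi hd) hid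

lemma EZ_le_sqrt_mul_exp {i : ℕ} (hd : d ≠ 0) (hi : i ≠ 0) (hin : i < n) (j : ℕ) :
    EZ n d i j ≤ exp 1 ^ 2 * √(n * d) *
      exp (n * (d / 2 * Hmat (i / n) (j / (n * d)) - (d - 1) * binEntropy (i / n))) := by
  have hn : n ≠ 0 := by omega
  have hEZ : 0 ≤ EZ n d i j := by rw [EZ]; positivity
  set B := Hmat ((i : ℝ) / n) ((j : ℝ) / (n * d))
  set H := binEntropy ((i : ℝ) / n)
  refine le_of_mul_le_mul_left ?_ (exp_pos (n * d * H))
  calc exp (n * d * H) * EZ n d i j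
      ≤ exp 1 ^ 2 * √(n * d) * (n * d).choose (i * d) * EZ n d i j := by
        gcongr
        exact exp_binEntropy_le_choose_mul hd hi hin
    _ = exp 1 ^ 2 * √(n * d) * ((n * d).choose (i * d) * EZ n d i j) := by ring
    _ ≤ exp 1 ^ 2 * √(n * d) * (n.choose i * exp (n * d / 2 * B)) := by
        gcongr ?_ * ?_
        exact choose_mul_EZ_le hn hd i j
    _ ≤ exp 1 ^ 2 * √(n * d) * (exp (n * H) * exp (n * d / 2 * B)) := by
        gcongr
        exact choose_le_exp_binEntropy hn hin.le
    _ = exp (n * d * H) * (exp 1 ^ 2 * √(n * d) * exp (n * (d / 2 * B - (d - 1) * H))) := by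
        rw [← exp_add, mul_left_comm (exp (n * d * H)), ← exp_add]
        ring_nf

lemma sqrt_mul_natCast_le (n d : ℕ) : √(n * d : ℝ) ≤ d * √n := by
  have hdd : (d : ℝ) ≤ d ^ 2 := mod_cast Nat.le_self_pow two_ne_zero d
  rw [sqrt_le_left (by positivity), mul_pow, sq_sqrt (Nat.cast_nonneg n), mul_comm]
  gcongr

end ConfigurationModel

/-- Lemma: there is a universal constant `C` such that for all `d ≥ 1`, `n` with `n*d` even,
`1 ≤ i ≤ n - 1` and `0 ≤ j ≤ i d / 2`,
`E[Z_{i,j}] ≤ C d √n exp{n [(d/2) H(M(i/n, j/(nd))) - (d-1) H(i/n, 1 - i/n)]}`. -/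
theorem EZ_entropy_bound :
    ∃ C : ℝ, 0 < C ∧ ∀ (n d i j : ℕ), 1 ≤ d → Even (n * d) →
      1 ≤ i → i ≤ n - 1 → 2 * j ≤ i * d →
      EZ n d i j ≤ C * d * Real.sqrt n *
        Real.exp (n * ((d / 2) * Hmat ((i : ℝ) / n) ((j : ℝ) / (n * d))
          - ((d : ℝ) - 1) * (h ((i : ℝ) / n) + h (1 - (i : ℝ) / n)))) := by
  refine ⟨exp 1 ^ 2, by positivity, fun n d i j hd _ hi hin _ ↦ ?_⟩
  rw [h_add_h_one_sub, mul_assoc (exp 1 ^ 2)]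
  refine (EZ_le_sqrt_mul_exp (by omega) (by omega) (by omega) j).trans ?_
  gcongr
  exact sqrt_mul_natCast_le n d

end
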